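/- arXiv:1212.0373 — 6 statements merged into one kernel-verified Lean document; each statement's English description precedes it below -/
import Mathlib

section
/- Let S be a finitely generated additive commutative monoid. Inside the space Hom(S, ℝ≥0∞) of additive monoid homomorphisms from S to (ℝ≥0∞, +), with the topology of pointwise convergence, the subset of homomorphisms all of whose values are finite (i.e. f(s) ≠ ∞ for every s ∈ S) is an open subset. -/
open scoped ENNReal

/-! A homomorphism takes all its values in a submonoid `P` as soon as it does so on a generating
set. With finitely many generators and `P` open, this is a finite intersection of open conditions,
one for each evaluation at a generator. The finite values form an open submonoid of `ℝ≥0∞`. -/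

section OpenSubmonoid

variable {S M : Type*} [AddMonoid S]

theorem forall_map_mem_iff_of_closure_eq_top [AddZeroClass M] {T : Set S}
    (hT : AddSubmonoid.closure T = ⊤) (φ : S →+ M) (P : AddSubmonoid M) :
    (∀ s, φ s ∈ P) ↔ ∀ t ∈ T, φ t ∈ P :=
  calc (∀ s, φ s ∈ P)
    _ ↔ ⊤ ≤ P.comap φ := by
      simp only [SetLike.le_def, AddSubmonoid.mem_top, true_imp_iff, AddSubmonoid.mem_comap]
    _ ↔ T ⊆ P.comap φ := by rw [← hT, AddSubmonoid.closure_le]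

theorem isOpen_setOf_forall_map_mem [AddZeroClass M] [TopologicalSpace M] [AddMonoid.FG S]
    {X : Type*} [TopologicalSpace X] {φ : X → S →+ M} (hφ : ∀ s, Continuous fun x ↦ φ x s)
    {P : AddSubmonoid M} (hP : IsOpen (P : Set M)) :
    IsOpen {x | ∀ s, φ x s ∈ P} := by
  obtain ⟨T, hT⟩ := AddMonoid.FG.fg_top (M := S)
  simp only [forall_map_mem_iff_of_closure_eq_top hT, Set.ofPred_forall]
  exact isOpen_biInter_finset fun t _ ↦ hP.preimage (hφ t)

theorem stmt1_general [AddZeroClass M] [TopologicalSpace M] [AddMonoid.FG S]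
    {P : AddSubmonoid M} (hP : IsOpen (P : Set M)) :
    IsOpen {f : {f : S → M // f 0 = 0 ∧ ∀ a b : S, f (a + b) = f a + f b} |
      ∀ s : S, f.1 s ∈ P} :=
  isOpen_setOf_forall_map_mem
    (φ := fun f : {f : S → M // f 0 = 0 ∧ ∀ a b : S, f (a + b) = f a + f b} ↦
      ⟨⟨f.1, f.2.1⟩, f.2.2⟩)
    (fun s ↦ (continuous_apply s).comp continuous_subtype_val) hP

end OpenSubmonoid

/-- The additive submonoid `[0, ∞)` of `ℝ≥0∞`, given as the complement of `∞` so that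
membership is by definition `x ≠ ∞`. -/
def finiteENNReal : AddSubmonoid ℝ≥0∞ where
  carrier := {∞}ᶜ
  zero_mem' := ENNReal.zero_ne_top
  add_mem' hx hy := ENNReal.add_ne_top.2 ⟨hx, hy⟩

/-- For a finitely generated additive commutative monoid `S`, inside the
space `Hom(S, ℝ≥0∞)` of additive monoid homomorphisms (with the topology of pointwise
convergence, i.e. the subspace topology from the product space `S → ℝ≥0∞`), the subset
of homomorphisms all of whose values are finite is open. -/
theorem stmt1 (S : Type*) [AddCommMonoid S] [AddMonoid.FG S] :
    IsOpen {f : {f : S → ℝ≥0∞ // f 0 = 0 ∧ ∀ a b : S, f (a + b) = f a + f b} |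
      ∀ s : S, f.1 s ≠ ∞} :=
  stmt1_general (P := finiteENNReal) isOpen_compl_singleton
end

section
/- Let n be a natural number and let S be a finitely generated additive submonoid of ℤⁿ (the additive group of functions Fin n → ℤ). Inside the space Hom(S, ℝ≥0∞) of additive monoid homomorphisms from S to (ℝ≥0∞, +), with the topology of pointwise convergence, the subset of homomorphisms all of whose values are finite is dense. -/
open scoped ENNReal

/-!
Let `F` be the face of a finitely generated cancellative monoid `M` on which `f : M → [0, ∞]` is
finite. Since `ℝ` is divisible, `f` restricted to `F` extends to a real homomorphism on the
Grothendieck group of `M`. As `F` is a face, no nontrivial natural combination of the generators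
outside `F` lies in the subgroup spanned by `F`, so Gordan's alternative, applied modulo that
subgroup, lets us correct the extension by a homomorphism which vanishes on `F` and is as large as
we like on these generators. The corrected homomorphisms are nonnegative on `M` and converge
pointwise to `f`.
-/

open Algebra Filter
open scoped NNReal Topology

section Extension

variable {N G A : Type*} [AddCommMonoid N] [AddCommGroup G] [AddCommGroup A]

theorem grothendieckAddGroup_lift_of (j : N →+ G) (x : N) :
    GrothendieckAddGroup.lift j (GrothendieckAddGroup.of x) = j x :=
  DFunLike.congr_fun (GrothendieckAddGroup.lift.symm_apply_apply j) x

theorem grothendieckAddGroup_lift_injective {j : N →+ G} (hj : Function.Injective j) :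
    Function.Injective (GrothendieckAddGroup.lift j) := by
  rw [injective_iff_map_eq_zero]
  intro z hz
  rw [GrothendieckAddGroup.lift_apply, sub_eq_zero] at hz
  have hsec := (AddLocalization.addMonoidOf (⊤ : AddSubmonoid N)).sec_spec z
  rw [hj hz] at hsec
  exact add_eq_right.1 hsec

theorem exists_addMonoidHom_apply_eq_of_injective [DivisibleBy A ℤ] {j : N →+ G}
    (hj : Function.Injective j) (f : N →+ A) : ∃ φ : G →+ A, ∀ x, φ (j x) = f x := by
  obtain ⟨φ, hφ⟩ := (Module.Baer.of_divisible A).extension_property_addMonoidHom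
    (GrothendieckAddGroup.lift j) (grothendieckAddGroup_lift_injective hj)
    (GrothendieckAddGroup.lift f)
  refine ⟨φ, fun x => ?_⟩
  rw [← grothendieckAddGroup_lift_of j, ← grothendieckAddGroup_lift_of f, ← hφ,
    AddMonoidHom.comp_apply]

theorem exists_addMonoidHom_apply_eq_of_not_isOfFinAddOrder [DivisibleBy A ℤ] {x : G}
    (hx : ¬IsOfFinAddOrder x) (a : A) : ∃ φ : G →+ A, φ x = a := by
  have hinj : Function.Injective (multiplesHom G x) :=
    injective_nsmul_iff_not_isOfFinAddOrder.2 hx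
  obtain ⟨φ, hφ⟩ := exists_addMonoidHom_apply_eq_of_injective hinj (multiplesHom A a)
  exact ⟨φ, by simpa using hφ 1⟩

end Extension

section Gordan

variable {ι : Type*}

theorem eq_zero_and_forall_eq_zero_of_insert {G : Type*} [AddCommMonoid G] [DecidableEq ι]
    {s : Finset ι} {m : ι} (hm : m ∉ s) {v : ι → G}
    (hv : ∀ k : ι → ℕ, ∑ i ∈ insert m s, k i • v i = 0 → ∀ i ∈ insert m s, k i = 0)
    {a : ℕ} {k : ι → ℕ} (hk : a • v m + ∑ i ∈ s, k i • v i = 0) : a = 0 ∧ ∀ i ∈ s, k i = 0 := by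
  have hne : ∀ i ∈ s, i ≠ m := fun i hi => ne_of_mem_of_not_mem hi hm
  have hzero := hv (Function.update k m a) (by
    rw [Finset.sum_insert hm, Function.update_self, ← hk]
    congr 1
    exact Finset.sum_congr rfl fun i hi => by rw [Function.update_of_ne (hne i hi)])
  refine ⟨by simpa using hzero m (Finset.mem_insert_self m s), fun i hi => ?_⟩
  simpa [hne i hi] using hzero i (Finset.mem_insert_of_mem hi)

theorem le_apply_of_nsmul_eq_sum {G A : Type*} [AddCommMonoid G] [AddCommMonoid A] [LinearOrder A]
    [IsOrderedCancelAddMonoid A] {s : Finset ι} {v : ι → G} {k : ι → ℕ} {n : ℕ} {x : G}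
    (hn : n ≠ 0) (hx : n • x = ∑ i ∈ s, k i • v i) {j : ι} (hj : j ∈ s) (hkj : k j ≠ 0)
    {g : G →+ A} {a : A} (hg : ∀ i ∈ s, 0 ≤ g (v i)) (ha : n • a ≤ g (v j)) : a ≤ g x := by
  refine le_of_nsmul_le_nsmul_right hn ?_
  calc n • a ≤ g (v j) := ha
    _ ≤ k j • g (v j) := le_self_nsmul (hg j hj) hkj
    _ ≤ ∑ i ∈ s, k i • g (v i) :=
      Finset.single_le_sum (f := fun i => k i • g (v i)) (fun i hi => nsmul_nonneg (hg i hi) _) hj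
    _ = n • g x := by rw [← map_nsmul, hx, map_sum]; simp only [map_nsmul]

/-- Gordan's alternative, by induction on `s`: for a new index `m`, either the old family remains
without relations modulo `v m`, and the quotient by `v m` applies, or a positive multiple of `v m`
is a combination of the old family, and large values there force a large value at `v m`. -/
theorem exists_addMonoidHom_forall_le_apply {G A : Type*} [AddCommGroup G] [AddCommGroup A]
    [LinearOrder A] [IsOrderedAddMonoid A] [DivisibleBy A ℤ] (s : Finset ι) (v : ι → G)
    (hv : ∀ k : ι → ℕ, ∑ i ∈ s, k i • v i = 0 → ∀ i ∈ s, k i = 0) (c : ι → A) :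
    ∃ g : G →+ A, ∀ i ∈ s, c i ≤ g (v i) := by
  classical
  induction s using Finset.induction_on generalizing G c with
  | empty => exact ⟨0, by simp⟩
  | insert m s hm ih =>
    have hv' := fun a k => eq_zero_and_forall_eq_zero_of_insert (a := a) (k := k) hm hv
    simp only [Finset.forall_mem_insert]
    by_cases hquot : ∀ k : ι → ℕ, ∑ i ∈ s, k i • v i ∈ AddSubgroup.zmultiples (v m) →
        ∀ i ∈ s, k i = 0
    · have hm_order : ¬IsOfFinAddOrder (v m) := by
        rw [isOfFinAddOrder_iff_nsmul_eq_zero]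
        rintro ⟨a, ha, hav⟩
        exact ha.ne' (hv' a 0 (by simpa using hav)).1
      obtain ⟨φ, hφ⟩ := exists_addMonoidHom_apply_eq_of_not_isOfFinAddOrder hm_order (c m)
      let π := QuotientAddGroup.mk' (AddSubgroup.zmultiples (v m))
      obtain ⟨g, hg⟩ := ih (fun i => π (v i))
        (fun k hk => hquot k ((QuotientAddGroup.eq_zero_iff _).1 (by simpa [π] using hk)))
        (fun i => c i - φ (v i))
      have hπm : π (v m) = 0 :=
        (QuotientAddGroup.eq_zero_iff _).2 (AddSubgroup.mem_zmultiples _)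
      refine ⟨g.comp π + φ, by simp [hπm, hφ], fun i hi => ?_⟩
      simpa using sub_le_iff_le_add.1 (hg i hi)
    · push Not at hquot
      obtain ⟨k, ⟨z, hz⟩, j, hj, hkj⟩ := hquot
      obtain ⟨n, hn, hnk⟩ : ∃ n : ℕ, n ≠ 0 ∧ n • v m = ∑ i ∈ s, k i • v i := by
        obtain ⟨n, rfl | rfl⟩ := z.eq_nat_or_neg
        · refine ⟨n, fun hn => hkj ?_, by simpa using hz⟩
          exact (hv' 0 k (by simpa [hn] using hz.symm)).2 j hj
        · exact absurd ((hv' n k (by simp [← hz])).2 j hj) hkj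
      obtain ⟨g, hg⟩ := ih v (fun k hk => (hv' 0 k (by simpa using hk)).2)
        (fun i => c i ⊔ (0 ⊔ n • c m))
      simp only [sup_le_iff] at hg
      exact ⟨g, le_apply_of_nsmul_eq_sum hn hnk hj hkj (fun i hi => (hg i hi).2.1) (hg j hj).2.2,
        fun i hi => (hg i hi).1⟩

end Gordan

section ENNRealHom

variable {M : Type*} [AddCommMonoid M]

/-- The face of `M` on which a homomorphism to `[0, ∞]` takes finite values. -/
def finiteFace (f : M →+ ℝ≥0∞) : AddSubmonoid M where
  carrier := {x | f x ≠ ∞}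
  zero_mem' := by simp
  add_mem' hx hy := by simpa using And.intro hx hy

theorem add_mem_finiteFace {f : M →+ ℝ≥0∞} {x y : M} :
    x + y ∈ finiteFace f ↔ x ∈ finiteFace f ∧ y ∈ finiteFace f := by
  change f (x + y) ≠ ∞ ↔ f x ≠ ∞ ∧ f y ≠ ∞
  rw [map_add, ENNReal.add_ne_top]

/-- The real-valued homomorphism which `f` induces on its finite face. -/
noncomputable def toRealOnFiniteFace (f : M →+ ℝ≥0∞) : finiteFace f →+ ℝ where
  toFun x := (f x).toReal
  map_zero' := by simp
  map_add' x y := by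
    rw [AddSubmonoid.coe_add, map_add, ENNReal.toReal_add x.2 y.2]

theorem eq_zero_of_sum_nsmul_mem_finiteFace {f : M →+ ℝ≥0∞} {s : Finset M}
    (hs : ∀ x ∈ s, f x = ∞) {k : M → ℕ} (hk : ∑ x ∈ s, k x • x ∈ finiteFace f) :
    ∀ x ∈ s, k x = 0 := by
  intro x hx
  by_contra hkx
  have hsum : ∑ x ∈ s, f (k x • x) ≠ ∞ := map_sum f _ s ▸ hk
  apply ENNReal.sum_ne_top.1 hsum x hx
  rw [map_nsmul, hs x hx, nsmul_eq_mul, ENNReal.mul_top (Nat.cast_ne_zero.2 hkx)]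

variable [IsCancelAdd M]

theorem mem_finiteFace_of_of_mem_range_lift {f : M →+ ℝ≥0∞} {x : M}
    (hx : GrothendieckAddGroup.of x ∈ (GrothendieckAddGroup.lift
      (GrothendieckAddGroup.of.comp (finiteFace f).subtype)).range) : x ∈ finiteFace f := by
  obtain ⟨z, hz⟩ := hx
  rw [GrothendieckAddGroup.lift_apply, sub_eq_iff_eq_add] at hz
  simp only [AddMonoidHom.comp_apply, ← map_add] at hz
  obtain ⟨a, b, hab⟩ : ∃ a b : finiteFace f, (a : M) = x + b :=
    ⟨_, _, GrothendieckAddGroup.of_injective hz⟩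
  exact (add_mem_finiteFace.1 (hab ▸ a.2)).1

theorem exists_addMonoidHom_real_forall_le (f : M →+ ℝ≥0∞) {s : Finset M}
    (hs : ∀ x ∈ s, f x = ∞) (C : ℝ) :
    ∃ ψ : M →+ ℝ, (∀ x, f x ≠ ∞ → ψ x = (f x).toReal) ∧ ∀ x ∈ s, C ≤ ψ x := by
  let j := GrothendieckAddGroup.of.comp (finiteFace f).subtype
  have hj : Function.Injective j :=
    GrothendieckAddGroup.of_injective.comp Subtype.val_injective
  obtain ⟨φ, hφ⟩ := exists_addMonoidHom_apply_eq_of_injective hj (toRealOnFiniteFace f)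
  let π := (QuotientAddGroup.mk' (GrothendieckAddGroup.lift j).range).comp GrothendieckAddGroup.of
  have hπ : ∀ x, π x = 0 ↔ GrothendieckAddGroup.of x ∈ (GrothendieckAddGroup.lift j).range :=
    fun _ => QuotientAddGroup.eq_zero_iff _
  have hindep : ∀ k : M → ℕ, ∑ x ∈ s, k x • π x = 0 → ∀ x ∈ s, k x = 0 := by
    intro k hk
    simp only [← map_nsmul, ← map_sum] at hk
    exact eq_zero_of_sum_nsmul_mem_finiteFace hs
      (mem_finiteFace_of_of_mem_range_lift ((hπ _).1 hk))
  obtain ⟨g, hg⟩ := exists_addMonoidHom_forall_le_apply s π hindep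
    (fun x => C - φ (GrothendieckAddGroup.of x))
  refine ⟨g.comp π + φ.comp GrothendieckAddGroup.of, fun x hx => ?_, fun x hx => ?_⟩
  · have hπx : π x = 0 := (hπ x).2 ⟨_, grothendieckAddGroup_lift_of j ⟨x, hx⟩⟩
    have hφx : φ (GrothendieckAddGroup.of x) = (f x).toReal := hφ ⟨x, hx⟩
    simp only [AddMonoidHom.add_apply, AddMonoidHom.comp_apply, hπx, hφx, map_zero, zero_add]
  · exact sub_le_iff_le_add.1 (hg x hx)

theorem exists_addMonoidHom_nnreal_forall_le [AddMonoid.FG M] (f : M →+ ℝ≥0∞) (C : ℝ≥0) :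
    ∃ φ : M →+ ℝ≥0, (∀ x, f x ≠ ∞ → φ x = f x) ∧ ∀ x, f x = ∞ → C ≤ φ x := by
  classical
  obtain ⟨T, hT⟩ := AddMonoid.FG.fg_top (M := M)
  obtain ⟨ψ, hψ_fin, hψ_top⟩ := exists_addMonoidHom_real_forall_le f
    (s := T.filter (f · = ∞)) (fun x hx => (Finset.mem_filter.1 hx).2) C
  have hψ : ∀ x, 0 ≤ ψ x ∧ (f x = ∞ → C ≤ ψ x) := by
    intro x
    induction hT ▸ AddSubmonoid.mem_top x using AddSubmonoid.closure_induction with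
    | mem x hx =>
      by_cases hfx : f x = ∞
      · have hle := hψ_top x (Finset.mem_filter.2 ⟨hx, hfx⟩)
        exact ⟨C.2.trans hle, fun _ => hle⟩
      · exact ⟨hψ_fin x hfx ▸ ENNReal.toReal_nonneg, fun h => absurd h hfx⟩
    | zero => simp
    | add x y _ _ hx hy =>
      rw [map_add, map_add, ENNReal.add_eq_top]
      refine ⟨add_nonneg hx.1 hy.1, ?_⟩
      rintro (h | h)
      · exact le_add_of_le_of_nonneg (hx.2 h) hy.1
      · exact le_add_of_nonneg_of_le hx.1 (hy.2 h)
  let φ : M →+ ℝ≥0 :=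
    { toFun := fun x => ⟨ψ x, (hψ x).1⟩
      map_zero' := Subtype.ext ψ.map_zero
      map_add' := fun x y => Subtype.ext (ψ.map_add x y) }
  refine ⟨φ, fun x hx => ?_, fun x hx => (hψ x).2 hx⟩
  have hφx : φ x = (f x).toNNReal := NNReal.coe_injective (hψ_fin x hx)
  rw [hφx, ENNReal.coe_toNNReal hx]

theorem exists_seq_addMonoidHom_nnreal_tendsto [AddMonoid.FG M] (f : M →+ ℝ≥0∞) :
    ∃ φ : ℕ → M →+ ℝ≥0, ∀ x, Tendsto (fun n => (φ n x : ℝ≥0∞)) atTop (𝓝 (f x)) := by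
  choose φ hφ_fin hφ_top using fun n : ℕ => exists_addMonoidHom_nnreal_forall_le f n
  refine ⟨φ, fun x => ?_⟩
  by_cases hx : f x = ∞
  · rw [hx]
    exact tendsto_nhds_top_mono' ENNReal.tendsto_nat_nhds_top fun n =>
      (ENNReal.coe_natCast n).ge.trans (ENNReal.coe_le_coe.2 (hφ_top n x hx))
  · simp only [hφ_fin _ x hx, tendsto_const_nhds]

end ENNRealHom

theorem stmt2_general {M : Type*} [AddCommMonoid M] [IsCancelAdd M] [AddMonoid.FG M] :
    Dense {f : {f : M → ℝ≥0∞ // f 0 = 0 ∧ ∀ a b : M, f (a + b) = f a + f b} |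
      ∀ s : M, f.1 s ≠ ∞} := by
  rintro ⟨f, hf_zero, hf_add⟩
  obtain ⟨φ, hφ⟩ := exists_seq_addMonoidHom_nnreal_tendsto ⟨⟨f, hf_zero⟩, hf_add⟩
  refine mem_closure_of_tendsto (b := atTop)
    (f := fun n => ⟨fun x => φ n x, by simp, fun a b => by simp⟩) ?_
    (Eventually.of_forall fun n x => ENNReal.coe_ne_top)
  exact tendsto_subtype_rng.2 (tendsto_pi_nhds.2 hφ)

/-- For a finitely generated additive submonoid `S` of `ℤⁿ`, inside the
space `Hom(S, ℝ≥0∞)` of additive monoid homomorphisms (with the topology of pointwise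
convergence), the subset of homomorphisms all of whose values are finite is dense. -/
theorem stmt2 (n : ℕ) (S : AddSubmonoid (Fin n → ℤ)) (hS : S.FG) :
    Dense {f : {f : S → ℝ≥0∞ // f 0 = 0 ∧ ∀ a b : S, f (a + b) = f a + f b} |
      ∀ s : S, f.1 s ≠ ∞} := by
  have : AddMonoid.FG S := (AddMonoid.fg_iff_addSubmonoid_fg S).2 hS
  exact stmt2_general (M := S)
end

section
/- Let E be a finite-dimensional real normed vector space and let C ⊆ E be a convex set. Then for every point x ∈ C there exists exactly one set F ⊆ E such that F is convex, F is an extreme subset of C, and x lies in the intrinsic (relative) interior of F. Consequently, C is the disjoint union of the relative interiors of its faces. -/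
/-!
The face of `C` having `x` in its relative interior is the minimal face of `C` at `x`: the points
`y` of `C` from which the segment to `x` can be prolonged inside `C` beyond `x`. Every extreme
subset of `C` containing `x` contains the minimal face by definition of extremeness. Conversely, an
extreme subset with `x` in its relative interior is contained in it, because its segments ending at
`x` can be prolonged. In finite dimension this prolongation property characterises the relative
interior points of a convex set: some relative interior point `p` exists, and a point `x` strictly
between `p` and a point of the set is again a relative interior point.
-/

open AffineMap AffineSubspace Set Topology

section OrderedSemiring

variable {𝕜 E : Type*} [Semiring 𝕜] [PartialOrder 𝕜] [AddCommMonoid E] [SMul 𝕜 E]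

variable (𝕜) in
/-- The minimal face of `C` at `x`: the points of `C` from which the segment to `x` can be prolonged
inside `C` beyond `x`. For `x ∈ C` with `C` convex it is the smallest face of `C` containing `x`. -/
def minimalFace (C : Set E) (x : E) : Set E :=
  {y ∈ C | ∃ z ∈ C, x ∈ openSegment 𝕜 y z}

namespace minimalFace

variable {C F : Set E} {x y : E}

theorem subset : minimalFace 𝕜 C x ⊆ C :=
  sep_subset _ _

theorem exists_mem_openSegment (hy : y ∈ minimalFace 𝕜 C x) :
    ∃ z ∈ minimalFace 𝕜 C x, x ∈ openSegment 𝕜 y z := by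
  obtain ⟨hyC, z, hzC, hx⟩ := hy
  exact ⟨z, ⟨hzC, y, hyC, by rwa [openSegment_symm]⟩, hx⟩

theorem subset_of_isExtreme (hF : IsExtreme 𝕜 C F) (hx : x ∈ F) : minimalFace 𝕜 C x ⊆ F :=
  fun _ ⟨hy, _, hz, hxyz⟩ ↦ hF.left_mem_of_mem_openSegment hy hz hx hxyz

end minimalFace

end OrderedSemiring

section OrderedField

variable {𝕜 E : Type*} [Field 𝕜] [LinearOrder 𝕜] [IsStrictOrderedRing 𝕜] [AddCommGroup E]
  [Module 𝕜 E]

theorem exists_mem_openSegment_of_mem_openSegment_left {u v x y z : E}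
    (hy : y ∈ openSegment 𝕜 u v) (hx : x ∈ openSegment 𝕜 y z) :
    ∃ w ∈ openSegment 𝕜 v z, x ∈ openSegment 𝕜 u w := by
  obtain ⟨a, b, ha, hb, hab, rfl⟩ := hy
  obtain ⟨p, q, hp, hq, hpq, rfl⟩ := hx
  have hpbq : 0 < p * b + q := by positivity
  refine ⟨(p * b / (p * b + q)) • v + (q / (p * b + q)) • z,
    ⟨_, _, by positivity, by positivity, by field_simp, rfl⟩,
    p * a, p * b + q, by positivity, hpbq, by linear_combination p * hab + hpq, ?_⟩
  match_scalars <;> field_simp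

theorem exists_mem_openSegment_of_mem_openSegment_inter {x y y₁ y₂ z₁ z₂ : E}
    (h₁ : x ∈ openSegment 𝕜 y₁ z₁) (h₂ : x ∈ openSegment 𝕜 y₂ z₂)
    (hy : y ∈ openSegment 𝕜 y₁ y₂) :
    ∃ z ∈ openSegment 𝕜 z₁ z₂, x ∈ openSegment 𝕜 y z := by
  obtain ⟨p, q, hp, hq, hpq, hx₁⟩ := h₁
  obtain ⟨r, s, hr, hs, hrs, hx₂⟩ := h₂
  obtain ⟨a, b, ha, hb, hab, rfl⟩ := hy
  -- Weighting the two expressions of `x` by `a * r` and `b * p` gives `y₁` and `y₂` the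
  -- ratio `a : b`.
  refine ⟨(a * r * q / (a * r * q + b * p * s)) • z₁ + (b * p * s / (a * r * q + b * p * s)) • z₂,
    ⟨_, _, by positivity, by positivity, by field_simp, rfl⟩,
    mem_openSegment_iff_div.2 ⟨p * r, a * r * q + b * p * s, by positivity, by positivity, ?_⟩⟩
  have hsum : p * r + (a * r * q + b * p * s) = a * r + b * p := by
    linear_combination a * r * hpq + b * p * hrs - p * r * hab
  have hx : (a * r + b * p) • x =
      (a * r) • (p • y₁ + q • z₁) + (b * p) • (r • y₂ + s • z₂) := by
    rw [hx₁, hx₂, add_smul]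
  have hpos : a * r + b * p ≠ 0 := by positivity
  rw [hsum, ← inv_smul_smul₀ hpos x, hx]
  match_scalars <;> field_simp

namespace minimalFace

variable {C : Set E} {x : E}

theorem self_mem (hx : x ∈ C) : x ∈ minimalFace 𝕜 C x :=
  ⟨hx, x, hx, by simp only [openSegment_same, mem_singleton_iff]⟩

theorem convex (hC : Convex 𝕜 C) : Convex 𝕜 (minimalFace 𝕜 C x) := by
  rw [convex_iff_openSegment_subset]
  rintro y₁ ⟨hy₁, z₁, hz₁, h₁⟩ y₂ ⟨hy₂, z₂, hz₂, h₂⟩ y hy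
  obtain ⟨z, hz, hx⟩ := exists_mem_openSegment_of_mem_openSegment_inter h₁ h₂ hy
  exact ⟨hC.openSegment_subset hy₁ hy₂ hy, z, hC.openSegment_subset hz₁ hz₂ hz, hx⟩

theorem isExtreme (hC : Convex 𝕜 C) : IsExtreme 𝕜 C (minimalFace 𝕜 C x) := by
  refine ⟨subset, ?_⟩
  rintro u hu v hv y ⟨-, z, hz, hx⟩ hy
  obtain ⟨w, hw, hx⟩ := exists_mem_openSegment_of_mem_openSegment_left hy hx
  exact ⟨hu, w, hC.openSegment_subset hv hz hw, hx⟩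

end minimalFace

section Topology

variable [TopologicalSpace 𝕜] [OrderTopology 𝕜] [TopologicalSpace E] [IsTopologicalAddGroup E]
  [ContinuousSMul 𝕜 E]

theorem exists_mem_openSegment_of_mem_intrinsicInterior {s : Set E} {x y : E}
    (hx : x ∈ intrinsicInterior 𝕜 s) (hy : y ∈ s) : ∃ z ∈ s, x ∈ openSegment 𝕜 y z := by
  obtain ⟨x, hx, rfl⟩ := hx
  let line (t : 𝕜) : affineSpan 𝕜 s :=
    ⟨lineMap (x : E) y t, lineMap_mem t x.2 (subset_affineSpan 𝕜 s hy)⟩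
  have hline : Continuous line := lineMap_continuous.subtype_mk _
  have hline₀ : line 0 = x := Subtype.ext (lineMap_apply_zero _ _)
  have hnear : ∀ᶠ t in 𝓝 0, (line t : E) ∈ s :=
    hline.continuousAt.eventually (hline₀ ▸ mem_interior_iff_mem_nhds.1 hx)
  obtain ⟨t, hts, ht⟩ := ((hnear.filter_mono nhdsWithin_le_nhds).and
    (self_mem_nhdsWithin : Iio (0 : 𝕜) ∈ 𝓝[<] 0)).exists
  have ht : 0 < -t := neg_pos.2 ht
  refine ⟨line t, hts, mem_openSegment_iff_div.2 ⟨-t, 1, ht, one_pos, ?_⟩⟩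
  have hpos : -t + 1 ≠ 0 := by positivity
  simp only [line, lineMap_apply_module]
  match_scalars <;> field_simp <;> ring

theorem eq_minimalFace_of_mem_intrinsicInterior {C F : Set E} {x : E} (hF : IsExtreme 𝕜 C F)
    (hx : x ∈ intrinsicInterior 𝕜 F) : F = minimalFace 𝕜 C x := by
  refine Subset.antisymm (fun y hy ↦ ?_)
    (minimalFace.subset_of_isExtreme hF (intrinsicInterior_subset hx))
  obtain ⟨z, hz, hxyz⟩ := exists_mem_openSegment_of_mem_intrinsicInterior hx hy
  exact ⟨hF.subset hy, z, hF.subset hz, hxyz⟩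

end Topology

end OrderedField

section Real

variable {E : Type*} [AddCommGroup E] [Module ℝ E] [TopologicalSpace E] [IsTopologicalAddGroup E]
  [ContinuousSMul ℝ E] [T2Space E] {s : Set E} {x : E}

theorem interior_nonempty_of_convex_of_affineSpan_eq_top [FiniteDimensional ℝ E]
    (hs : Convex ℝ s) (hspan : affineSpan ℝ s = ⊤) : (interior s).Nonempty := by
  let e : EuclideanSpace ℝ (Fin (Module.finrank ℝ E)) ≃L[ℝ] E := toEuclidean.symm
  have hspan' : affineSpan ℝ (e ⁻¹' s) = ⊤ := by
    have h := comap_span e.toLinearEquiv.toAffineEquiv s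
    rw [hspan, comap_top] at h
    exact h.symm
  have hint : (interior (e ⁻¹' s)).Nonempty :=
    (hs.linear_preimage e.toLinearMap).interior_nonempty_iff_affineSpan_eq_top.2 hspan'
  have hpre : e ⁻¹' interior s = interior (e ⁻¹' s) := e.toHomeomorph.preimage_interior s
  obtain ⟨p, hp⟩ := hint
  exact ⟨e p, hpre.symm.subset hp⟩

theorem mem_interior_of_forall_exists_mem_openSegment [FiniteDimensional ℝ E]
    (hs : Convex ℝ s) (hspan : affineSpan ℝ s = ⊤)
    (h : ∀ y ∈ s, ∃ z ∈ s, x ∈ openSegment ℝ y z) : x ∈ interior s := by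
  obtain ⟨p, hp⟩ := interior_nonempty_of_convex_of_affineSpan_eq_top hs hspan
  obtain ⟨z, hz, hx⟩ := h p (interior_subset hp)
  exact hs.openSegment_interior_self_subset_interior hp hz hx

theorem mem_intrinsicInterior_of_forall_exists_mem_openSegment
    [FiniteDimensional ℝ (vectorSpan ℝ s)] (hs : Convex ℝ s) (hx : x ∈ s)
    (h : ∀ y ∈ s, ∃ z ∈ s, x ∈ openSegment ℝ y z) : x ∈ intrinsicInterior ℝ s := by
  have : Nonempty s := ⟨x, hx⟩
  have : FiniteDimensional ℝ (affineSpan ℝ s).direction := by rwa [direction_affineSpan]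
  let x₀ : affineSpan ℝ s := ⟨x, subset_affineSpan ℝ s hx⟩
  let e : (affineSpan ℝ s).direction ≃ᴬ[ℝ] affineSpan ℝ s := .vaddConst ℝ x₀
  let f : (affineSpan ℝ s).direction →ᵃ[ℝ] E := (affineSpan ℝ s).subtype.comp e.toAffineMap
  have hf : Function.Injective f := Subtype.val_injective.comp e.injective
  have he₀ : e 0 = x₀ := zero_vadd (affineSpan ℝ s).direction x₀
  have hf₀ : f 0 = x := congrArg Subtype.val he₀
  have hspan : affineSpan ℝ (f ⁻¹' s) = ⊤ := by
    have h := comap_span e.toAffineEquiv ((↑) ⁻¹' s)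
    rw [affineSpan_coe_preimage_eq_top, comap_top] at h
    exact h.symm
  have hprolong : ∀ y ∈ f ⁻¹' s, ∃ z ∈ f ⁻¹' s, 0 ∈ openSegment ℝ y z := by
    intro y hy
    obtain ⟨z, hz, hxyz⟩ := h (f y) hy
    obtain ⟨z, rfl⟩ : ∃ z', f z' = z :=
      (e.surjective ⟨z, subset_affineSpan ℝ s hz⟩).imp fun _ ↦ congrArg Subtype.val
    rw [← image_openSegment, ← hf₀, hf.mem_set_image] at hxyz
    exact ⟨z, hz, hxyz⟩
  have hzero : 0 ∈ interior (f ⁻¹' s) :=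
    mem_interior_of_forall_exists_mem_openSegment (hs.affine_preimage f) hspan hprolong
  have hpre : e ⁻¹' interior ((↑) ⁻¹' s) = interior (f ⁻¹' s) :=
    e.toHomeomorph.preimage_interior _
  rw [← hpre, mem_preimage, he₀] at hzero
  exact ⟨x₀, hzero, rfl⟩

theorem mem_intrinsicInterior_minimalFace {C : Set E} [FiniteDimensional ℝ (vectorSpan ℝ C)]
    (hC : Convex ℝ C) (hx : x ∈ C) : x ∈ intrinsicInterior ℝ (minimalFace ℝ C x) := by
  have : FiniteDimensional ℝ (vectorSpan ℝ (minimalFace ℝ C x)) :=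
    Submodule.finiteDimensional_of_le (vectorSpan_mono ℝ minimalFace.subset)
  exact mem_intrinsicInterior_of_forall_exists_mem_openSegment (minimalFace.convex hC)
    (minimalFace.self_mem hx) fun _ ↦ minimalFace.exists_mem_openSegment

theorem stmt5_general {C : Set E} [FiniteDimensional ℝ (vectorSpan ℝ C)] (hC : Convex ℝ C) :
    ∀ x ∈ C, ∃! F : Set E,
      Convex ℝ F ∧ IsExtreme ℝ C F ∧ x ∈ intrinsicInterior ℝ F := by
  intro x hx
  refine ⟨minimalFace ℝ C x, ⟨minimalFace.convex hC, minimalFace.isExtreme hC,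
    mem_intrinsicInterior_minimalFace hC hx⟩, ?_⟩
  rintro F ⟨-, hF, hxF⟩
  exact eq_minimalFace_of_mem_intrinsicInterior hF hxF

end Real

/-- In a finite-dimensional real normed vector space, every point of a
convex set `C` lies in the intrinsic (relative) interior of exactly one face (convex
extreme subset) of `C`; consequently `C` is the disjoint union of the relative
interiors of its faces. -/
theorem stmt5 (E : Type*) [NormedAddCommGroup E] [NormedSpace ℝ E]
    [FiniteDimensional ℝ E] (C : Set E) (hC : Convex ℝ C) :
    ∀ x ∈ C, ∃! F : Set E,
      Convex ℝ F ∧ IsExtreme ℝ C F ∧ x ∈ intrinsicInterior ℝ F :=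
  stmt5_general hC
end

section
/- Let S be an additive commutative monoid and let F ⊆ S be a face of S, i.e., a submonoid such that a + b ∈ F implies a ∈ F and b ∈ F. Let A denote the set of additive monoid homomorphisms f : S → ℝ≥0∞ whose set of finite values is exactly F (that is, f(s) ≠ ∞ if and only if s ∈ F), with the topology of pointwise convergence. Then the restriction map f ↦ f|_F is a homeomorphism from A onto the space Hom(F, ℝ≥0) of additive monoid homomorphisms F → ℝ≥0, with the topology of pointwise convergence; its inverse extends a homomorphism on F by the value ∞ on S ∖ F. -/
open scoped ENNReal NNReal
open Classical

/-! A homomorphism with finite locus `F` is determined by its finite values on `F`, and these can be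
prescribed freely: as `F` is a face, `a + b ∉ F` exactly when `a ∉ F` or `b ∉ F`, which is the rule
for `a + b = ∞` in `ℝ≥0∞`. Restriction is continuous because `ENNReal.toNNReal` is continuous
away from `∞`, and extension is continuous because each of its coordinates is either a coordinate
of the given homomorphism or constant. -/

section Functions

variable {α : Type*} (p : α → Prop)

/-- The restriction of an extended function to the points satisfying `p`, for functions that are
finite there. Encoded with `ENNReal.toNNReal`, so a value `∞` would be sent to `0`. -/
def restrictNNReal (f : α → ℝ≥0∞) (a : Subtype p) : ℝ≥0 := (f a).toNNReal

/-- The extension by `∞` of a finite function defined on the points satisfying `p`. -/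
noncomputable def extendTop (g : Subtype p → ℝ≥0) (a : α) : ℝ≥0∞ :=
  if h : p a then (g ⟨a, h⟩ : ℝ≥0∞) else ∞

variable {p}

theorem coe_restrictNNReal {f : α → ℝ≥0∞} {a : Subtype p} (ha : f a ≠ ∞) :
    (restrictNNReal p f a : ℝ≥0∞) = f a :=
  ENNReal.coe_toNNReal ha

theorem extendTop_of_pos (g : Subtype p → ℝ≥0) {a : α} (ha : p a) :
    extendTop p g a = g ⟨a, ha⟩ :=
  dif_pos ha

theorem extendTop_of_neg (g : Subtype p → ℝ≥0) {a : α} (ha : ¬p a) : extendTop p g a = ∞ :=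
  dif_neg ha

theorem extendTop_ne_top_iff (g : Subtype p → ℝ≥0) (a : α) : extendTop p g a ≠ ∞ ↔ p a := by
  by_cases ha : p a
  · simp [extendTop_of_pos g ha, ha]
  · simp [extendTop_of_neg g ha, ha]

theorem restrictNNReal_extendTop (g : Subtype p → ℝ≥0) :
    restrictNNReal p (extendTop p g) = g := by
  funext a
  rw [restrictNNReal, extendTop_of_pos g a.2, ENNReal.toNNReal_coe]

theorem extendTop_restrictNNReal {f : α → ℝ≥0∞} (hf : ∀ a, f a ≠ ∞ ↔ p a) :
    extendTop p (restrictNNReal p f) = f := by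
  funext a
  by_cases ha : p a
  · rw [extendTop_of_pos _ ha, coe_restrictNNReal ((hf a).2 ha)]
  · rw [extendTop_of_neg _ ha, not_ne_iff.1 (mt (hf a).1 ha)]

theorem continuousOn_restrictNNReal :
    ContinuousOn (restrictNNReal p) {f | ∀ a, p a → f a ≠ ∞} :=
  continuousOn_pi.2 fun a ↦
    ENNReal.continuousOn_toNNReal.comp (continuous_apply a.1).continuousOn fun _ hf ↦ hf a a.2

theorem continuous_extendTop : Continuous (extendTop p) := by
  refine continuous_pi fun a ↦ ?_
  by_cases ha : p a
  · simp only [extendTop_of_pos _ ha]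
    fun_prop
  · simp only [extendTop_of_neg _ ha]
    fun_prop

end Functions

section Homomorphisms

variable {S : Type*} [AddZeroClass S] {F : AddSubmonoid S}

theorem restrictNNReal_zero {f : S → ℝ≥0∞} (hf : f 0 = 0) : restrictNNReal (· ∈ F) f 0 = 0 := by
  rw [restrictNNReal, ZeroMemClass.coe_zero, hf, ENNReal.toNNReal_zero]

theorem restrictNNReal_add {f : S → ℝ≥0∞} (hf : ∀ a b, f (a + b) = f a + f b) {a b : F}
    (ha : f a ≠ ∞) (hb : f b ≠ ∞) :
    restrictNNReal (· ∈ F) f (a + b) =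
      restrictNNReal (· ∈ F) f a + restrictNNReal (· ∈ F) f b := by
  simp only [restrictNNReal, AddSubmonoid.coe_add, hf, ENNReal.toNNReal_add ha hb]

theorem extendTop_zero {g : F → ℝ≥0} (hg : g 0 = 0) : extendTop (· ∈ F) g 0 = 0 := by
  rw [extendTop_of_pos g F.zero_mem]
  exact congrArg ENNReal.ofNNReal hg

theorem extendTop_add (hF : ∀ a b : S, a + b ∈ F → a ∈ F ∧ b ∈ F) {g : F → ℝ≥0}
    (hg : ∀ a b, g (a + b) = g a + g b) (a b : S) :
    extendTop (· ∈ F) g (a + b) = extendTop (· ∈ F) g a + extendTop (· ∈ F) g b := by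
  by_cases ha : a ∈ F
  · by_cases hb : b ∈ F
    · rw [extendTop_of_pos g ha, extendTop_of_pos g hb, extendTop_of_pos g (F.add_mem ha hb),
        ← ENNReal.coe_add, ← hg]
      rfl
    · rw [extendTop_of_neg g hb, extendTop_of_neg g fun h ↦ hb (hF a b h).2, add_top]
  · rw [extendTop_of_neg g ha, extendTop_of_neg g fun h ↦ ha (hF a b h).1, top_add]

/-- `Hom(M, N)` as a subtype of `M → N`, so that it carries the topology of pointwise
convergence. -/
abbrev PointwiseHom (M N : Type*) [AddZeroClass M] [AddZeroClass N] : Type _ :=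
  {f : M → N // f 0 = 0 ∧ ∀ a b, f (a + b) = f a + f b}

/-- The stratum of `Hom(S, ℝ≥0∞)` attached to `F`: the homomorphisms whose set of finite values
is exactly `F`, with the topology of pointwise convergence. -/
abbrev FiniteStratum (F : AddSubmonoid S) : Type _ :=
  {f : S → ℝ≥0∞ // (f 0 = 0 ∧ ∀ a b, f (a + b) = f a + f b) ∧ ∀ s, f s ≠ ∞ ↔ s ∈ F}

/-- Restriction to a face `F`, as a homeomorphism from the stratum attached to `F` onto
`Hom(F, ℝ≥0)`; its inverse is extension by `∞`. -/
noncomputable def FiniteStratum.restrictHomeomorph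
    (hF : ∀ a b : S, a + b ∈ F → a ∈ F ∧ b ∈ F) : FiniteStratum F ≃ₜ PointwiseHom F ℝ≥0 where
  toFun f := ⟨restrictNNReal (· ∈ F) f.1, restrictNNReal_zero f.2.1.1, fun a b ↦
    restrictNNReal_add f.2.1.2 ((f.2.2 a).2 a.2) ((f.2.2 b).2 b.2)⟩
  invFun g := ⟨extendTop (· ∈ F) g.1, ⟨extendTop_zero g.2.1, extendTop_add hF g.2.2⟩,
    extendTop_ne_top_iff g.1⟩
  left_inv f := Subtype.ext (extendTop_restrictNNReal f.2.2)
  right_inv g := Subtype.ext (restrictNNReal_extendTop g.1)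
  continuous_toFun := Continuous.subtype_mk
    (continuousOn_restrictNNReal.comp_continuous continuous_subtype_val fun f a ↦ (f.2.2 a).2) _
  continuous_invFun := Continuous.subtype_mk
    (continuous_extendTop.comp continuous_subtype_val) _

end Homomorphisms

theorem stmt7_general {S : Type*} [AddZeroClass S] (F : AddSubmonoid S)
    (hF : ∀ a b : S, a + b ∈ F → a ∈ F ∧ b ∈ F) :
    ∃ e : FiniteStratum F ≃ₜ PointwiseHom F ℝ≥0,
      (∀ f (s : F), ((e f).1 s : ℝ≥0∞) = f.1 (s : S)) ∧
      (∀ g (s : S), (e.symm g).1 s =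
        if hs : s ∈ F then ((g.1 ⟨s, hs⟩ : ℝ≥0) : ℝ≥0∞) else ∞) :=
  ⟨FiniteStratum.restrictHomeomorph hF, fun f s ↦ coe_restrictNNReal ((f.2.2 s).2 s.2),
    fun _ _ ↦ rfl⟩

/-- Let `F` be a face of an additive commutative monoid `S`. The set `A` of
additive monoid homomorphisms `f : S → ℝ≥0∞` whose set of finite values is exactly `F`
(with the topology of pointwise convergence) is homeomorphic to `Hom(F, ℝ≥0)` via the
restriction map `f ↦ f|_F`, whose inverse extends a homomorphism on `F` by `∞` on
`S ∖ F`. -/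
theorem stmt7 (S : Type*) [AddCommMonoid S] (F : AddSubmonoid S)
    (hF : ∀ a b : S, a + b ∈ F → a ∈ F ∧ b ∈ F) :
    ∃ e : {f : S → ℝ≥0∞ //
            (f 0 = 0 ∧ ∀ a b : S, f (a + b) = f a + f b) ∧ ∀ s : S, f s ≠ ∞ ↔ s ∈ F} ≃ₜ
          {g : F → ℝ≥0 // g 0 = 0 ∧ ∀ a b : F, g (a + b) = g a + g b},
      (∀ f (s : F), ((e f).1 s : ℝ≥0∞) = f.1 (s : S)) ∧
      (∀ g (s : S), (e.symm g).1 s =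
        if hs : s ∈ F then ((g.1 ⟨s, hs⟩ : ℝ≥0) : ℝ≥0∞) else ∞) :=
  stmt7_general F hF
end

section
/- Let n ≥ 1 and let S be an additive submonoid of ℤⁿ (functions Fin n → ℤ) whose group closure is all of ℤⁿ (i.e., the subgroup of ℤⁿ generated by S equals ℤⁿ). Let σ = {x ∈ ℝⁿ : Σ_i x(i)·s(i) ≥ 0 for all s ∈ S} be the dual cone of S, with its subspace topology from ℝⁿ. Then the map sending x ∈ σ to the homomorphism s ↦ Σ_i x(i)·s(i) is a homeomorphism from σ onto the space Hom(S, ℝ≥0) of additive monoid homomorphisms S → ℝ≥0, with the topology of pointwise convergence. -/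
open scoped NNReal

/-!
A homomorphism from `S` to an abelian group extends uniquely to the group generated by `S`, since
every element of that group is a difference `a - b` with `a b : S`. This makes restriction to `S`
a bijection from the homomorphisms `ℤⁿ → ℝ` that are nonnegative on `S` onto `Hom(S, ℝ≥0)`. Its
inverse is continuous because the value of the extension at `a - b` is the difference of the values
at `a` and `b`. Finally, homomorphisms `ℤⁿ → ℝ` are the points of `ℝⁿ`, through their values on the
standard basis.
-/

open Topology

section Pointwise

variable {M A : Type*} [AddZeroClass M] [AddZeroClass A] [TopologicalSpace A]

/-- The topology of pointwise convergence on additive homomorphisms: the coarsest one for which all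
evaluations are continuous, whether or not `M` carries a topology. -/
instance addMonoidHomPointwiseTopology : TopologicalSpace (M →+ A) :=
  .induced DFunLike.coe Pi.topologicalSpace

theorem isInducing_addMonoidHom_coe : IsInducing (DFunLike.coe : (M →+ A) → M → A) :=
  ⟨rfl⟩

theorem continuous_addMonoidHom_eval (m : M) : Continuous fun φ : M →+ A ↦ φ m :=
  (continuous_apply m).comp isInducing_addMonoidHom_coe.continuous

theorem continuous_addMonoidHom_iff {X : Type*} [TopologicalSpace X] {F : X → M →+ A} :
    Continuous F ↔ ∀ m, Continuous fun x ↦ F x m :=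
  isInducing_addMonoidHom_coe.continuous_iff.trans continuous_pi_iff

variable (M A) in
/-- Unbundling homomorphisms: `M →+ A` as a subspace of the product `M → A`. -/
def addMonoidHomHomeomorphSubtype :
    (M →+ A) ≃ₜ {f : M → A // f 0 = 0 ∧ ∀ a b, f (a + b) = f a + f b} where
  toFun φ := ⟨φ, map_zero φ, map_add φ⟩
  invFun f := ⟨⟨f.1, f.2.1⟩, f.2.2⟩
  continuous_toFun := isInducing_addMonoidHom_coe.continuous.subtype_mk _
  continuous_invFun := continuous_addMonoidHom_iff.2 fun m ↦
    (continuous_apply m).comp continuous_subtype_val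

end Pointwise

/-- The identification of `Rⁿ` with `Hom(ℤⁿ, R)` given by the pairing `∑ i, x i * v i`. -/
def piHomeomorphIntPiHom (ι R : Type*) [Fintype ι] [DecidableEq ι] [Ring R] [TopologicalSpace R]
    [IsTopologicalSemiring R] : (ι → R) ≃ₜ ((ι → ℤ) →+ R) where
  toFun x := AddMonoidHom.mk' (fun v ↦ ∑ i, x i * (v i : R)) fun v w ↦ by
    simp [mul_add, Finset.sum_add_distrib]
  invFun φ i := φ (Pi.single i 1)
  left_inv x := by ext i; simp [Pi.single_apply]
  right_inv φ := by ext i; simp [Pi.single_apply]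
  continuous_toFun := continuous_addMonoidHom_iff.2 fun v ↦
    continuous_finsetSum _ fun i _ ↦ (continuous_apply i).mul continuous_const
  continuous_invFun := continuous_pi fun i ↦ continuous_addMonoidHom_eval (Pi.single i 1)

section Generating

variable {G A : Type*} [AddCommGroup G] {S : AddSubmonoid G}

theorem exists_sub_eq_of_closure_eq_top (hS : AddSubgroup.closure (S : Set G) = ⊤) (g : G) :
    ∃ a b : S, (a - b : G) = g := by
  induction (hS ▸ AddSubgroup.mem_top g : g ∈ AddSubgroup.closure (S : Set G)) using
    AddSubgroup.closure_induction with
  | mem s hs => exact ⟨⟨s, hs⟩, 0, sub_zero s⟩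
  | zero => exact ⟨0, 0, sub_zero 0⟩
  | add _ _ _ _ hg hh =>
    obtain ⟨a, b, rfl⟩ := hg
    obtain ⟨c, d, rfl⟩ := hh
    exact ⟨a + c, b + d, add_sub_add_comm _ _ _ _⟩
  | neg _ _ hg =>
    obtain ⟨a, b, rfl⟩ := hg
    exact ⟨b, a, (neg_sub _ _).symm⟩

theorem isLocalizationMap_subtype_of_closure_eq_top
    (hS : AddSubgroup.closure (S : Set G) = ⊤) :
    (⊤ : AddSubmonoid S).IsLocalizationMap S.subtype where
  map_addUnits s := AddGroup.isAddUnit _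
  surj g := by
    obtain ⟨a, b, rfl⟩ := exists_sub_eq_of_closure_eq_top hS g
    exact ⟨(a, ⟨b, trivial⟩), sub_add_cancel _ _⟩
  exists_of_eq h := ⟨0, congrArg _ (Subtype.ext h)⟩

theorem exists_extension_of_closure_eq_top [AddCommGroup A]
    (hS : AddSubgroup.closure (S : Set G) = ⊤) (f : S →+ A) :
    ∃ φ : G →+ A, φ.comp S.subtype = f := by
  let k : (⊤ : AddSubmonoid S).LocalizationMap G :=
    ⟨S.subtype, isLocalizationMap_subtype_of_closure_eq_top hS⟩
  exact ⟨k.lift fun s ↦ AddGroup.isAddUnit (f s), k.lift_comp _⟩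

theorem isEmbedding_comp_subtype_of_closure_eq_top [AddCommGroup A] [TopologicalSpace A]
    [ContinuousSub A] (hS : AddSubgroup.closure (S : Set G) = ⊤) :
    IsEmbedding fun φ : G →+ A ↦ φ.comp S.subtype := by
  choose a b hab using exists_sub_eq_of_closure_eq_top hS
  let extend (f : S →+ A) (g : G) : A := f (a g) - f (b g)
  have continuous_extend : Continuous extend := continuous_pi fun g ↦
    (continuous_addMonoidHom_eval (a g)).sub (continuous_addMonoidHom_eval (b g))
  have continuous_comp : Continuous fun φ : G →+ A ↦ φ.comp S.subtype :=
    continuous_addMonoidHom_iff.2 fun s ↦ continuous_addMonoidHom_eval (s : G)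
  have extend_comp : (extend ∘ fun φ : G →+ A ↦ φ.comp S.subtype) = DFunLike.coe := by
    funext φ g
    exact (map_sub φ _ _).symm.trans (congrArg φ (hab g))
  exact .of_comp continuous_comp continuous_extend
    (extend_comp ▸ ⟨isInducing_addMonoidHom_coe, DFunLike.coe_injective⟩)

end Generating

section DualCone

variable {G : Type*} [AddCommGroup G] (S : AddSubmonoid G)

/-- The dual cone of `S`, as a subset of `Hom(G, ℝ)`; for `G = ℤⁿ` this ambient space is `ℝⁿ`
by `piHomeomorphIntPiHom`. -/
def dualCone : Set (G →+ ℝ) :=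
  {φ | ∀ s ∈ S, 0 ≤ φ s}

/-- The canonical map from the dual cone of `S` to `Hom(S, ℝ≥0)`. -/
def dualConeRestrict (φ : dualCone S) : S →+ ℝ≥0 where
  toFun s := ⟨φ.1 s, φ.2 s s.2⟩
  map_zero' := NNReal.eq (map_zero φ.1)
  map_add' a b := NNReal.eq (map_add φ.1 (a : G) b)

theorem continuous_dualConeRestrict : Continuous (dualConeRestrict S) :=
  continuous_addMonoidHom_iff.2 fun s ↦
    ((continuous_addMonoidHom_eval (s : G)).comp continuous_subtype_val).subtype_mk _

variable {S}

theorem isEmbedding_dualConeRestrict (hS : AddSubgroup.closure (S : Set G) = ⊤) :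
    IsEmbedding (dualConeRestrict S) := by
  let toReal (f : S →+ ℝ≥0) : S →+ ℝ := (NNReal.toRealHom : ℝ≥0 →+ ℝ).comp f
  have continuous_toReal : Continuous toReal := continuous_addMonoidHom_iff.2 fun s ↦
    NNReal.continuous_coe.comp (continuous_addMonoidHom_eval s)
  have toReal_comp_restrict : IsEmbedding (toReal ∘ dualConeRestrict S) :=
    (isEmbedding_comp_subtype_of_closure_eq_top hS).comp .subtypeVal
  exact .of_comp (continuous_dualConeRestrict S) continuous_toReal toReal_comp_restrict

theorem surjective_dualConeRestrict (hS : AddSubgroup.closure (S : Set G) = ⊤) :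
    Function.Surjective (dualConeRestrict S) := by
  intro f
  obtain ⟨φ, hφ⟩ :=
    exists_extension_of_closure_eq_top hS ((NNReal.toRealHom : ℝ≥0 →+ ℝ).comp f)
  have φ_eq (s : S) : φ s = f s := DFunLike.congr_fun hφ s
  exact ⟨⟨φ, fun s hs ↦ (f ⟨s, hs⟩).2.trans_eq (φ_eq ⟨s, hs⟩).symm⟩,
    AddMonoidHom.ext fun s ↦ NNReal.eq (φ_eq s)⟩

theorem stmt8_general (hS : AddSubgroup.closure (S : Set G) = ⊤) :
    IsHomeomorph (dualConeRestrict S) :=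
  isHomeomorph_iff_isEmbedding_surjective.2
    ⟨isEmbedding_dualConeRestrict hS, surjective_dualConeRestrict hS⟩

end DualCone

/-- Let `S` be an additive submonoid of `ℤⁿ` (for `n ≥ 1`) generating `ℤⁿ`
as a group, and let `σ = {x ∈ ℝⁿ : Σ_i x i * s i ≥ 0 for all s ∈ S}` be its dual cone.
Then `x ↦ (s ↦ Σ_i x i * s i)` is a homeomorphism from `σ` onto the space
`Hom(S, ℝ≥0)` of additive monoid homomorphisms with the topology of pointwise
convergence. -/
theorem stmt8 (n : ℕ) (hn : 1 ≤ n) (S : AddSubmonoid (Fin n → ℤ))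
    (hS : AddSubgroup.closure (S : Set (Fin n → ℤ)) = ⊤) :
    ∃ e : {x : Fin n → ℝ // ∀ s ∈ S, 0 ≤ ∑ i, x i * (s i : ℝ)} ≃ₜ
          {f : S → ℝ≥0 // f 0 = 0 ∧ ∀ a b : S, f (a + b) = f a + f b},
      ∀ x (s : S), ((e x).1 s : ℝ) = ∑ i, x.1 i * ((s : Fin n → ℤ) i : ℝ) :=
  ⟨((piHomeomorphIntPiHom (Fin n) ℝ).subtype (q := (· ∈ dualCone S)) fun _ ↦ Iff.rfl).trans
    ((stmt8_general hS).homeomorph.trans (addMonoidHomHomeomorphSubtype S ℝ≥0)), fun _ _ ↦ rfl⟩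
end

section
/- Let G be a stable weighted graph with legs and let e be an edge of G whose two endpoints u and v are distinct. Let G/e be the weighted graph with legs obtained by deleting e, identifying u and v to a single vertex of weight h(u) + h(v), and keeping all other vertices, edges (with induced endpoints), legs (with induced attachments), and weights. Then G/e is stable. -/
open Classical

/-- A (weighted) graph with edge-endpoint map `ends : E → Sym2 V` is connected if `V` is
nonempty and the equivalence relation generated by "`a` and `b` are the two endpoints of
some edge" has a single class. -/
def GraphConnected {V E : Type*} (ends : E → Sym2 V) : Prop :=
  Nonempty V ∧ ∀ a b : V, Relation.EqvGen (fun x y => ∃ e : E, ends e = s(x, y)) a b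

/-- The multiplicity of a vertex `v` in an unordered pair of endpoints: `2` for a loop
at `v`, `1` if `v` is one of two distinct endpoints, `0` otherwise. -/
noncomputable def endMult {V : Type*} (v : V) (p : Sym2 V) : ℕ :=
  Sym2.lift ⟨fun a b => (if a = v then 1 else 0) + (if b = v then 1 else 0),
    fun _ _ => add_comm _ _⟩ p

/-- The valence of a vertex `v`: the number of incidences of edges at `v` (loops counted
twice) plus the number of legs attached at `v`. -/
noncomputable def valence {V E L : Type*} (ends : E → Sym2 V) (leg : L → V) (v : V) : ℕ :=
  (∑ᶠ e : E, endMult v (ends e)) + Nat.card {l : L // leg l = v}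

/-- A weighted graph with legs is stable if it is connected and every vertex of weight
`0` has valence at least `3` and every vertex of weight `1` has valence at least `1`. -/
def GraphStable {V E L : Type*} (ends : E → Sym2 V) (leg : L → V) (h : V → ℕ) : Prop :=
  GraphConnected ends ∧ ∀ v : V,
    (h v = 0 → 3 ≤ valence ends leg v) ∧ (h v = 1 → 1 ≤ valence ends leg v)

/-!
Deleting the edge `e` costs no connectedness in `G/e`, because its endpoints are identified there.
It lowers the valences of `u` and `v` by one each and no other valence, and the valence of a vertex
of `G/e` is the sum of the valences of its preimages in `G - e`. So the vertices other than the
merged one keep their weight and valence, while the merged vertex has weight `h u + h v` and valence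
`n(u) + n(v) - 2`. If its weight is `0`, then `h u = h v = 0` and its valence is at least
`3 + 3 - 2`; if its weight is `1`, then `{h u, h v} = {0, 1}` and its valence is at least
`3 + 1 - 2`.
-/

/-- A graph with legs is locally finite if every vertex meets finitely many edges and carries
finitely many legs. Then `valence`, defined by `finsum` and `Nat.card`, is the true valence
rather than a default value. -/
def GraphLocallyFinite {V E L : Type*} (ends : E → Sym2 V) (leg : L → V) : Prop :=
  (∀ w, {x | w ∈ ends x}.Finite) ∧ ∀ w, {l | leg l = w}.Finite

/-- The quotient map on vertices which identifies `v` with `u`. The merged vertex is represented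
by `u`, so that the quotient is the type of vertices other than `v`. -/
noncomputable def mergeVertex {V : Type*} {u v : V} (huv : u ≠ v) (w : V) : {w : V // w ≠ v} :=
  if hw : w = v then ⟨u, huv⟩ else ⟨w, hw⟩

/-- The edge-endpoint map of the graph obtained by deleting the edge `e` and identifying the
vertex `v` with `u`; it is the contraction of `e` when `u` and `v` are the endpoints of `e`. -/
noncomputable def contractEnds {V E : Type*} (ends : E → Sym2 V) (e : E) {u v : V} (huv : u ≠ v)
    (x : {x : E // x ≠ e}) : Sym2 {w : V // w ≠ v} :=
  (ends x).map (mergeVertex huv)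

/-- The weight function of the contracted graph: the merged vertex, represented by `u`, gets the
weight `h u + h v`. -/
noncomputable def contractWeight {V : Type*} (h : V → ℕ) (u v : V) (w : {w : V // w ≠ v}) : ℕ :=
  if (w : V) = u then h u + h v else h w

theorem GraphConnected.map_subtype {V W E : Type*} {ends : E → Sym2 V} (hG : GraphConnected ends)
    {f : V → W} (hf : Function.Surjective f) {p : E → Prop}
    (hp : ∀ x, ¬p x → ((ends x).map f).IsDiag) :
    GraphConnected fun x : Subtype p => (ends x).map f := by
  obtain ⟨hV, hconn⟩ := hG
  let classes : Setoid W := Relation.EqvGen.setoid fun a b => ∃ x : Subtype p,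
    (ends x).map f = s(a, b)
  have related_of_edge : ∀ a b, (∃ x, ends x = s(a, b)) → classes.comap f a b := by
    rintro a b ⟨x, hx⟩
    by_cases hpx : p x
    · exact .rel _ _ ⟨⟨x, hpx⟩, by rw [hx, Sym2.map_mk]⟩
    · have hab : f a = f b := by simpa only [hx, Sym2.map_mk, Sym2.mk_isDiag_iff] using hp x hpx
      rw [Setoid.comap_rel, hab]
  refine ⟨hV.map f, hf.forall₂.2 fun a b => ?_⟩
  exact Setoid.eqvGen_le related_of_edge (hconn a b)

section Valence

variable {V W E L : Type*} {ends : E → Sym2 V} {leg : L → V}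

theorem endMult_mk (w a b : V) :
    endMult w s(a, b) = (if a = w then 1 else 0) + (if b = w then 1 else 0) :=
  rfl

theorem endMult_eq_zero_of_notMem {w : V} {z : Sym2 V} (hw : w ∉ z) : endMult w z = 0 := by
  induction z with
  | _ a b =>
    rw [Sym2.mem_iff, not_or] at hw
    rw [endMult_mk, if_neg (Ne.symm hw.1), if_neg (Ne.symm hw.2)]

theorem endMult_map {f : V → W} {w : W} {s : Finset V} (hs : ∀ x, f x = w ↔ x ∈ s) (z : Sym2 V) :
    endMult w (z.map f) = ∑ x ∈ s, endMult x z := by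
  induction z with
  | _ a b =>
    simp only [Sym2.map_mk, endMult_mk, hs, Finset.sum_add_distrib, Finset.sum_ite_eq]

theorem hasFiniteSupport_endMult {w : V} (hw : {x | w ∈ ends x}.Finite) :
    Function.HasFiniteSupport fun x => endMult w (ends x) :=
  hw.subset fun _ hx => by_contra fun hmem => hx (endMult_eq_zero_of_notMem hmem)

theorem card_subtype_comp_eq_sum {f : V → W} {w : W} {s : Finset V} (hs : ∀ x, f x = w ↔ x ∈ s)
    (hleg : ∀ x ∈ s, {l | leg l = x}.Finite) :
    Nat.card {l // f (leg l) = w} = ∑ x ∈ s, Nat.card {l // leg l = x} := by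
  have (x : s) : Finite {l // leg l = x} := (hleg x x.2).to_subtype
  rw [← Nat.card_congr (Equiv.sigmaSubtypeFiberEquivSubtype leg fun l => hs (leg l)),
    Nat.card_sigma]
  exact Finset.sum_coe_sort s fun x => Nat.card {l // leg l = x}

theorem valence_map (hG : GraphLocallyFinite ends leg) {f : V → W} {w : W} {s : Finset V}
    (hs : ∀ x, f x = w ↔ x ∈ s) :
    valence (fun x => (ends x).map f) (f ∘ leg) w = ∑ x ∈ s, valence ends leg x := by
  have edges : ∑ᶠ x, endMult w ((ends x).map f) = ∑ a ∈ s, ∑ᶠ x, endMult a (ends x) := by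
    simp only [endMult_map hs]
    exact finsum_sum_comm s _ fun a _ => hasFiniteSupport_endMult (hG.1 a)
  have legs := card_subtype_comp_eq_sum hs fun a _ => hG.2 a
  simp only [valence, Finset.sum_add_distrib, Function.comp_apply, edges, legs]

theorem endMult_add_valence_delete {w : V} (hw : {x | w ∈ ends x}.Finite) (e : E) :
    endMult w (ends e) + valence (fun x : {x // x ≠ e} => ends x) leg w = valence ends leg w := by
  have split := add_finsum_cond_ne e (hasFiniteSupport_endMult hw)
  rw [← finsum_subtype_eq_finsum_cond (· ≠ e)] at split
  rw [valence, valence, ← add_assoc, split]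

theorem GraphLocallyFinite.subtype (hG : GraphLocallyFinite ends leg) (p : E → Prop) :
    GraphLocallyFinite (fun x : Subtype p => ends x) leg :=
  ⟨fun w => (hG.1 w).preimage (f := Subtype.val) Subtype.val_injective.injOn, hG.2⟩

end Valence

section Contraction

variable {V E L : Type*} {ends : E → Sym2 V} {leg : L → V} {e : E} {u v : V} (huv : u ≠ v)

theorem mergeVertex_eq_iff {x : V} {w : {w : V // w ≠ v}} :
    mergeVertex huv x = w ↔ x = w ∨ x = v ∧ (w : V) = u := by
  grind [mergeVertex]

theorem mergeVertex_surjective : Function.Surjective (mergeVertex huv) := fun w =>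
  ⟨w, (mergeVertex_eq_iff huv).2 (.inl rfl)⟩

theorem isDiag_map_mergeVertex : (s(u, v).map (mergeVertex huv)).IsDiag := by
  have merged : mergeVertex huv v = ⟨u, huv⟩ := (mergeVertex_eq_iff huv).2 (.inr ⟨rfl, rfl⟩)
  rw [Sym2.map_mk, Sym2.mk_isDiag_iff, merged, mergeVertex_eq_iff]
  exact .inl rfl

theorem GraphConnected.contract (hG : GraphConnected ends) (he : ends e = s(u, v)) :
    GraphConnected (contractEnds ends e huv) :=
  hG.map_subtype (mergeVertex_surjective huv) fun x hx => by
    rw [not_not.1 hx, he]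
    exact isDiag_map_mergeVertex huv

theorem valence_contract_merged (hG : GraphLocallyFinite ends leg) (he : ends e = s(u, v)) :
    valence (contractEnds ends e huv) (mergeVertex huv ∘ leg) ⟨u, huv⟩ + 2 =
      valence ends leg u + valence ends leg v := by
  have merged := valence_map (hG.subtype (· ≠ e)) (f := mergeVertex huv) (w := ⟨u, huv⟩)
    (s := {u, v}) fun x => by simp [mergeVertex_eq_iff]
  rw [Finset.sum_pair huv] at merged
  have delete_u := endMult_add_valence_delete (leg := leg) (hG.1 u) e
  have delete_v := endMult_add_valence_delete (leg := leg) (hG.1 v) e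
  simp only [he, endMult_mk, if_neg huv, if_neg huv.symm, if_true] at delete_u delete_v
  unfold contractEnds
  lia

theorem valence_contract_of_ne (hG : GraphLocallyFinite ends leg) (he : ends e = s(u, v))
    {w : {w : V // w ≠ v}} (hw : (w : V) ≠ u) :
    valence (contractEnds ends e huv) (mergeVertex huv ∘ leg) w = valence ends leg w := by
  have unmerged := valence_map (hG.subtype (· ≠ e)) (f := mergeVertex huv) (w := w)
    (s := {(w : V)}) fun x => by simp [mergeVertex_eq_iff, hw]
  rw [Finset.sum_singleton] at unmerged
  have delete_w := endMult_add_valence_delete (leg := leg) (hG.1 w) e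
  rw [he, endMult_mk, if_neg hw.symm, if_neg w.2.symm, zero_add, zero_add] at delete_w
  exact unmerged.trans delete_w

end Contraction

theorem stmt11_general {V E L : Type*} {ends : E → Sym2 V} {leg : L → V} {h : V → ℕ}
    (hfin : GraphLocallyFinite ends leg) (hstable : GraphStable ends leg h)
    {e : E} {u v : V} (huv : u ≠ v) (he : ends e = s(u, v)) :
    GraphStable (contractEnds ends e huv) (mergeVertex huv ∘ leg) (contractWeight h u v) := by
  obtain ⟨hconn, hval⟩ := hstable
  refine ⟨hconn.contract huv he, fun w => ?_⟩
  by_cases hw : (w : V) = u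
  · obtain rfl : w = ⟨u, huv⟩ := Subtype.ext hw
    have hmerged := valence_contract_merged huv hfin he
    have hu := hval u
    have hv := hval v
    rw [contractWeight, if_pos rfl]
    lia
  · rw [valence_contract_of_ne huv hfin he hw, contractWeight, if_neg hw]
    exact hval w

/-- Contracting a non-loop edge `e` with distinct endpoints `u, v` of a
stable weighted graph with legs (deleting `e`, merging `v` into `u`, giving the merged
vertex weight `h u + h v`) yields a stable weighted graph with legs. -/
theorem stmt11 {V E L : Type} [Finite V] [Finite E] [Finite L]
    (ends : E → Sym2 V) (leg : L → V) (h : V → ℕ)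
    (hstable : GraphStable ends leg h)
    (e : E) (u v : V) (huv : u ≠ v) (he : ends e = s(u, v)) :
    GraphStable
      (fun e' : {x : E // x ≠ e} =>
        Sym2.map (fun w => if hw : w = v then (⟨u, huv⟩ : {w : V // w ≠ v}) else ⟨w, hw⟩)
          (ends e'.1))
      (fun l : L => if hw : leg l = v then (⟨u, huv⟩ : {w : V // w ≠ v}) else ⟨leg l, hw⟩)
      (fun w => if (w : V) = u then h u + h v else h (w : V)) :=
  stmt11_general ⟨fun _ => Set.toFinite _, fun _ => Set.toFinite _⟩ hstable huv he
end
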